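/- Let d ≥ 3 be an integer. There exists a constant C = C(d) > 0 with the following property: for every real-valued V : ℤᵈ → ℝ with ∑_{n ∈ ℤᵈ} |V(n)|^{2/3} < ∞, letting H = Δ + V, every eigenvalue of H lying outside [−d,d] is a real number λ with |λ| > d, and ∑_{λ ∈ E} |λ|·√(λ² − d²) ≤ ∑_{n ∈ ℤᵈ} V(n)² + C · ‖V‖_{2/3}, where E is the set of eigenvalues of H lying in ℂ∖[−d,d], each counted once. -/

import Mathlib

/-!
The estimate reduces to two elementary facts about an orthonormal family of eigenvectors `ψᵢ` with
eigenvalues `λᵢ`, `|λᵢ| > d`. By the arithmetic–geometric mean inequality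
`|λ| √(λ² - d²) ≤ (λ² - d²) + d² / 2`, so it suffices to bound `∑ (λᵢ² - d²)` and the number of
eigenvalues.

For the first (`sum_sq_sub_le`), expand `λᵢ² = ‖Δψᵢ + Vψᵢ‖²` and apply Bessel's inequality at each
site: `∑ (λᵢ² - d²) ≤ ∑ V² + (1 + d²) ∑ |V|`, with the sharp constant in front of `∑ V²`.

The second (`card_le`) is a Birman–Schwinger type bound `N ≤ 40 ∑ |V|`. It rests on the
transience of `ℤᵈ` for `d ≥ 3` (`transience`): `|f n|² ≤ 20 ⟨f, (d ± Δ) f⟩` for every `f ∈ ℓ²` and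
every site `n`. That inequality comes from an explicit supersolution, given by rational edge weights
(`wratio`) modelled on the superharmonic function `|x|^{-1/2}`.

Finally `∑ |V| ≤ ‖V‖_{2/3}` (`summable_abs_of_rpow`), and every bound on finite sets of eigenvalues
passes to the whole set because all summands are nonnegative.
-/

/-- `L` is the discrete Laplacian on `ℓ²(ℤᵈ)`:
`(Lf)(n) = (1/2)∑_{j=1}^d (f(n+eⱼ) + f(n-eⱼ))`. -/
def IsDiscreteLaplacian (d : ℕ)
    (L : lp (fun _ : Fin d → ℤ => ℂ) 2 →L[ℂ] lp (fun _ : Fin d → ℤ => ℂ) 2) : Prop :=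
  ∀ (f : lp (fun _ : Fin d → ℤ => ℂ) 2) (n : Fin d → ℤ),
    L f n = (1 / 2) * ∑ j : Fin d, (f (n + Pi.single j 1) + f (n - Pi.single j 1))

/-- `T` is the operator of multiplication by `V` on `ℓ²(ℤᵈ)`. -/
def IsMulOp (d : ℕ) (V : (Fin d → ℤ) → ℂ)
    (T : lp (fun _ : Fin d → ℤ => ℂ) 2 →L[ℂ] lp (fun _ : Fin d → ℤ => ℂ) 2) : Prop :=
  ∀ (f : lp (fun _ : Fin d → ℤ => ℂ) 2) (n : Fin d → ℤ), T f n = V n * f n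

/-- The set of eigenvalues of `H` lying in `ℂ \ [-d,d]`. -/
def evSet (d : ℕ)
    (H : lp (fun _ : Fin d → ℤ => ℂ) 2 →L[ℂ] lp (fun _ : Fin d → ℤ => ℂ) 2) : Set ℂ :=
  {l : ℂ | (∃ f : lp (fun _ : Fin d → ℤ => ℂ) 2, f ≠ 0 ∧ H f = l • f) ∧
    ¬ (l.im = 0 ∧ |l.re| ≤ d)}


noncomputable section
open scoped InnerProductSpace ComplexConjugate

/-- The Hilbert space `ℓ²(ℤᵈ)`. -/
abbrev LatticeL2 (d : ℕ) : Type := lp (fun _ : Fin d → ℤ => ℂ) 2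

/-! ### A supersolution for the lattice in dimension at least three -/

/-- The shifted squared Euclidean length `|x|² + 10`; the shift makes the discretization errors
harmless near the origin. -/
def wt {d : ℕ} (x : Fin d → ℤ) : ℝ := ∑ i, (x i : ℝ) ^ 2 + 10

/-- The weight of the edge from `x` to `x + eⱼ`: with `m = xⱼ + 1/2` and `s = wt x + m` the mean of
`wt` at its endpoints, it is `(4s - m) / (4s + m)`. This is a rational substitute for the ratio
`w (x + eⱼ) / w x` of the superharmonic function `w = wt ^ (-1/4)`. -/
def wratio {d : ℕ} (j : Fin d) (x : Fin d → ℤ) : ℝ :=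
  (4 * wt x + 3 * (x j + 1 / 2)) / (4 * wt x + 5 * (x j + 1 / 2))

lemma sq_le_wt {d : ℕ} (j : Fin d) (x : Fin d → ℤ) : (x j : ℝ) ^ 2 + 10 ≤ wt x := by
  have := Finset.single_le_sum (f := fun i => (x i : ℝ) ^ 2) (fun i _ => sq_nonneg _)
    (Finset.mem_univ j)
  simp only [wt]; linarith

lemma wratio_pos {d : ℕ} (j : Fin d) (x : Fin d → ℤ) : 0 < wratio j x := by
  have h := sq_le_wt j x
  have h1 : 0 < 4 * wt x + 3 * ((x j : ℝ) + 1 / 2) := by nlinarith [sq_nonneg ((x j : ℝ) + 1)]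
  have h2 : 0 < 4 * wt x + 5 * ((x j : ℝ) + 1 / 2) := by nlinarith [sq_nonneg ((x j : ℝ) + 1)]
  exact div_pos h1 h2

lemma wt_sub_single {d : ℕ} (j : Fin d) (x : Fin d → ℤ) :
    wt (x - Pi.single j 1) = wt x - 2 * (x j - 1 / 2) := by
  have h : ∀ i, (((x - Pi.single j 1 : Fin d → ℤ) i : ℤ) : ℝ) ^ 2
      = (x i : ℝ) ^ 2 - (if i = j then 2 * ((x j : ℝ) - 1 / 2) else 0) := by
    intro i
    by_cases hij : i = j
    · subst hij; simp; ring
    · simp [hij]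
  simp only [wt, h, Finset.sum_sub_distrib, Finset.sum_ite_eq', Finset.mem_univ, if_true]
  ring

/-- The contribution of the two edges at `x` in direction `j`. Exactly, it is `2` minus
twice a fraction with numerator `4t - 10 (xⱼ² - 1/4)`, where `t = wt x`, and a denominator depending
on `xⱼ`; enlarging the coefficient `10` to `11`
allows a common denominator for all directions. -/
lemma wratio_add_le {d : ℕ} (j : Fin d) (x : Fin d → ℤ) :
    wratio j x + (wratio j (x - Pi.single j 1))⁻¹
      ≤ 2 - 2 * (4 * wt x - 11 * (x j : ℝ) ^ 2) / (16 * wt x ^ 2 + 20 * wt x + 25 / 4) := by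
  have h := sq_le_wt j x
  have e : ((x - Pi.single j 1 : Fin d → ℤ) j : ℝ) = x j - 1 := by simp
  rw [wratio, wratio, wt_sub_single, e, inv_div]
  generalize wt x = t at *
  generalize (x j : ℝ) = y at *
  have h1 : 0 < 4 * t + 5 * (y + 1 / 2) := by nlinarith [sq_nonneg (y + 1)]
  have h2 : 0 < 4 * t - 5 * (y - 1 / 2) := by nlinarith [sq_nonneg (y - 1)]
  have ht : 10 ≤ t := by nlinarith [sq_nonneg y]
  have h3 : 0 < 16 * t ^ 2 + 20 * t + 25 / 4 := by positivity
  have e1 : (4 * t + 3 * (y + 1 / 2)) / (4 * t + 5 * (y + 1 / 2))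
      + (4 * (t - 2 * (y - 1 / 2)) + 5 * (y - 1 + 1 / 2)) /
        (4 * (t - 2 * (y - 1 / 2)) + 3 * (y - 1 + 1 / 2))
      = 2 - 2 * (4 * t - 10 * (y ^ 2 - 1 / 4)) /
        ((4 * t + 5 * (y + 1 / 2)) * (4 * t - 5 * (y - 1 / 2))) := by
    have : 4 * (t - 2 * (y - 1 / 2)) + 3 * (y - 1 + 1 / 2) = 4 * t - 5 * (y - 1 / 2) := by ring
    rw [this]
    rw [div_add_div _ _ h1.ne' h2.ne', eq_sub_iff_add_eq, ← add_div,
      div_eq_iff (mul_pos h1 h2).ne']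
    ring
  rw [e1]
  apply sub_le_sub_left
  rw [div_le_div_iff₀ h3 (mul_pos h1 h2)]
  -- Twice this product, plus a multiple of the common denominator, is the difference of both sides.
  have key : 0 ≤ y ^ 2 * (16 * t ^ 2 + 20 * t + 25 / 4 + 25 * (4 * t - 11 * y ^ 2)) := by
    apply mul_nonneg (sq_nonneg _)
    nlinarith
  nlinarith [key]

/-- The supersolution property of the edge weights: the total weight at a vertex is at most its
degree `2d`, with a definite gain at the origin. The coefficient `4d - 11` of `|x|²` obtained by
summing `wratio_add_le` is positive exactly when `d ≥ 3`. -/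
lemma sum_wratio_le {d : ℕ} (hd : 3 ≤ d) (x : Fin d → ℤ) :
    ∑ j, (wratio j x + (wratio j (x - Pi.single j 1))⁻¹)
      ≤ 2 * d - (if x = 0 then 1 / 10 else 0) := by
  have hd' : (3 : ℝ) ≤ d := by exact_mod_cast hd
  refine (Finset.sum_le_sum fun j _ => wratio_add_le j x).trans ?_
  have hs : ∑ j, (x j : ℝ) ^ 2 = wt x - 10 := by simp [wt]
  have h10 : 10 ≤ wt x := by
    have : 0 ≤ ∑ j, (x j : ℝ) ^ 2 := Finset.sum_nonneg fun _ _ => sq_nonneg _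
    linarith
  rw [Finset.sum_sub_distrib, ← Finset.sum_div, ← Finset.mul_sum, Finset.sum_sub_distrib,
    ← Finset.mul_sum _ _ (11 : ℝ), hs]
  simp only [Finset.sum_const, Finset.card_univ, Fintype.card_fin, nsmul_eq_mul]
  rw [mul_comm (d : ℝ) 2]
  apply sub_le_sub_left
  split_ifs with h
  · have : wt x = 10 := by simp [wt, h]
    rw [this, le_div_iff₀ (by norm_num)]
    linarith
  · apply div_nonneg
    · nlinarith
    · positivity

/-! ### The Laplacian as a sum of shifts -/

lemma memlp_shift {d : ℕ} (v : Fin d → ℤ) (f : LatticeL2 d) :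
    Memℓp (fun n => f (n + v)) 2 := by
  have := lp.memℓp f
  rw [memℓp_gen_iff (by norm_num)] at this ⊢
  exact (Equiv.addRight v).summable_iff.mpr this

/-- The unitary shift `(shift v f) n = f (n + v)`. -/
def shift {d : ℕ} (v : Fin d → ℤ) : LatticeL2 d ≃ₗᵢ[ℂ] LatticeL2 d where
  toFun f := ⟨fun n => f (n + v), memlp_shift v f⟩
  invFun f := ⟨fun n => f (n + -v), memlp_shift (-v) f⟩
  map_add' f g := by ext n; rfl
  map_smul' c f := by ext n; rfl
  left_inv f := by ext n; simp
  right_inv f := by ext n; simp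
  norm_map' f := by
    have h2 : 0 < (2 : ENNReal).toReal := by norm_num
    rw [lp.norm_eq_tsum_rpow h2, lp.norm_eq_tsum_rpow h2]
    congr 1
    exact (Equiv.addRight v).tsum_eq (fun n => ‖f n‖ ^ (2 : ENNReal).toReal)

@[simp] lemma shift_apply {d : ℕ} (v : Fin d → ℤ) (f : LatticeL2 d) (n : Fin d → ℤ) :
    shift v f n = f (n + v) := rfl

@[simp] lemma shift_symm_apply {d : ℕ} (v : Fin d → ℤ) (f : LatticeL2 d) (n : Fin d → ℤ) :
    (shift v).symm f n = f (n + -v) := rfl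

lemma summable_normSq {d : ℕ} (f : LatticeL2 d) : Summable fun n => ‖f n‖ ^ 2 := by
  have := (lp.memℓp f).summable (by norm_num)
  simpa using this

lemma norm_sq_eq {d : ℕ} (f : LatticeL2 d) : ‖f‖ ^ 2 = ∑' n, ‖f n‖ ^ 2 := by
  have := lp.norm_rpow_eq_tsum (p := 2) (by norm_num) f
  simpa using this

variable {d : ℕ} {L T : LatticeL2 d →L[ℂ] LatticeL2 d} {V : (Fin d → ℤ) → ℝ}

lemma laplacian_eq (hL : IsDiscreteLaplacian d L) (f : LatticeL2 d) :
    L f = (1 / 2 : ℂ) • ∑ j : Fin d, (shift (Pi.single j 1) f + (shift (Pi.single j 1)).symm f) := by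
  ext n
  rw [hL f n]
  rw [lp.coeFn_smul, Pi.smul_apply, lp.coeFn_sum, Finset.sum_apply]
  simp [sub_eq_add_neg]

lemma laplacian_symm (hL : IsDiscreteLaplacian d L) (f g : LatticeL2 d) :
    ⟪L f, g⟫_ℂ = ⟪f, L g⟫_ℂ := by
  rw [laplacian_eq hL, laplacian_eq hL, inner_smul_left, inner_smul_right, sum_inner, inner_sum]
  congr 1
  · simp [map_ofNat]
  · refine Finset.sum_congr rfl fun j _ => ?_
    rw [inner_add_left, inner_add_right, LinearIsometryEquiv.inner_map_eq_flip,
      LinearIsometryEquiv.inner_map_eq_flip, LinearIsometryEquiv.symm_symm, add_comm]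

lemma laplacian_norm_le (hL : IsDiscreteLaplacian d L) (f : LatticeL2 d) : ‖L f‖ ≤ d * ‖f‖ := by
  rw [laplacian_eq hL, norm_smul]
  have : ‖∑ j : Fin d, (shift (Pi.single j 1) f + (shift (Pi.single j 1)).symm f)‖
      ≤ ∑ j : Fin d, 2 * ‖f‖ := by
    refine norm_sum_le_of_le _ fun j _ => (norm_add_le _ _).trans ?_
    simp [two_mul]
  simp at this ⊢
  linarith

lemma mulOp_symm (hT : IsMulOp d (fun n => (V n : ℂ)) T) (f g : LatticeL2 d) :
    ⟪T f, g⟫_ℂ = ⟪f, T g⟫_ℂ := by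
  rw [lp.inner_eq_tsum, lp.inner_eq_tsum]
  refine tsum_congr fun n => ?_
  rw [hT, hT]
  simp
  ring

lemma laplacian_re_inner (hL : IsDiscreteLaplacian d L) (f : LatticeL2 d) :
    (⟪f, L f⟫_ℂ).re = ∑ j : Fin d, (⟪f, shift (Pi.single j 1) f⟫_ℂ).re := by
  rw [laplacian_eq hL, inner_smul_right, inner_sum]
  have h : ∀ j : Fin d, (⟪f, shift (Pi.single j 1) f + (shift (Pi.single j 1)).symm f⟫_ℂ).re
      = 2 * (⟪f, shift (Pi.single j 1) f⟫_ℂ).re := by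
    intro j
    rw [inner_add_right, ← LinearIsometryEquiv.inner_map_eq_flip, Complex.add_re, two_mul]
    congr 1
    exact inner_re_symm (𝕜 := ℂ) _ _
  rw [show (1 / 2 : ℂ) = ((1 / 2 : ℝ) : ℂ) by norm_num, Complex.re_ofReal_mul, Complex.re_sum]
  simp only [h, ← Finset.mul_sum]
  ring

/-- Transience of `ℤᵈ` for `d ≥ 3`, as a pointwise bound: the quadratic forms of `d - Δ` and of
`d + Δ` both dominate `|f n₀|² / 20`. On each edge,
`2 |f x| |f (x + eⱼ)| ≤ r |f x|² + r⁻¹ |f (x + eⱼ)|²` with `r` the edge weight centred at `n₀`;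
summing over all edges leaves the weights controlled by `sum_wratio_le`. -/
lemma transience (hd : 3 ≤ d) (hL : IsDiscreteLaplacian d L) (f : LatticeL2 d)
    (n₀ : Fin d → ℤ) :
    |(⟪f, L f⟫_ℂ).re| + ‖f n₀‖ ^ 2 / 20 ≤ d * ‖f‖ ^ 2 := by
  set r : Fin d → (Fin d → ℤ) → ℝ := fun j x => wratio j (x - n₀) with hr
  have rpos : ∀ j x, 0 < r j x := fun j x => wratio_pos _ _
  have hw : ∀ x, ∑ j, (r j x + (r j (x - Pi.single j 1))⁻¹)
      ≤ 2 * d - (if x = n₀ then 1 / 10 else 0) := by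
    intro x
    have := sum_wratio_le hd (x - n₀)
    simp only [sub_eq_zero] at this
    simpa only [hr, sub_right_comm] using this
  have hsum1 : ∀ j x, r j x + (r j (x - Pi.single j 1))⁻¹ ≤ 2 * d := by
    intro j x
    have h1 := Finset.single_le_sum (f := fun j => r j x + (r j (x - Pi.single j 1))⁻¹)
      (fun j _ => (add_pos (rpos j x) (inv_pos.2 (rpos j _))).le) (Finset.mem_univ j)
    have h2 := hw x
    have : (0 : ℝ) ≤ if x = n₀ then 1 / 10 else 0 := by split_ifs <;> norm_num
    linarith
  have hp := summable_normSq f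
  have hA : ∀ j, Summable fun x => r j x * ‖f x‖ ^ 2 := fun j =>
    Summable.of_nonneg_of_le (fun x => mul_nonneg (rpos j x).le (sq_nonneg _))
      (fun x => mul_le_mul_of_nonneg_right
        (by linarith [hsum1 j x, inv_pos.2 (rpos j (x - Pi.single j 1))]) (sq_nonneg _))
      (hp.mul_left (2 * (d : ℝ)))
  have hB : ∀ j, Summable fun x => (r j (x - Pi.single j 1))⁻¹ * ‖f x‖ ^ 2 := fun j =>
    Summable.of_nonneg_of_le (fun x => mul_nonneg (inv_pos.2 (rpos j _)).le (sq_nonneg _))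
      (fun x => mul_le_mul_of_nonneg_right
        (by linarith [hsum1 j x, rpos j x]) (sq_nonneg _))
      (hp.mul_left (2 * (d : ℝ)))
  have hB' : ∀ j, Summable fun x => (r j x)⁻¹ * ‖f (x + Pi.single j 1)‖ ^ 2 := fun j => by
    have := (Equiv.addRight (Pi.single j 1 : Fin d → ℤ)).summable_iff.mpr (hB j)
    simpa [Function.comp_def] using this
  have tB : ∀ j, ∑' x, (r j x)⁻¹ * ‖f (x + Pi.single j 1)‖ ^ 2
      = ∑' x, (r j (x - Pi.single j 1))⁻¹ * ‖f x‖ ^ 2 := fun j => by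
    have := (Equiv.addRight (Pi.single j 1 : Fin d → ℤ)).tsum_eq
      (fun x => (r j (x - Pi.single j 1))⁻¹ * ‖f x‖ ^ 2)
    simpa using this
  have hj : ∀ j, |(⟪f, shift (Pi.single j 1) f⟫_ℂ).re|
      ≤ (1 / 2) * ∑' x, (r j x + (r j (x - Pi.single j 1))⁻¹) * ‖f x‖ ^ 2 := by
    intro j
    refine (Complex.abs_re_le_norm _).trans ?_
    rw [lp.inner_eq_tsum]
    have hpt : ∀ x, ‖⟪f x, shift (Pi.single j 1) f x⟫_ℂ‖
        ≤ (1 / 2) * (r j x * ‖f x‖ ^ 2 + (r j x)⁻¹ * ‖f (x + Pi.single j 1)‖ ^ 2) := by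
      intro x
      refine (norm_inner_le_norm _ _).trans ?_
      rw [shift_apply]
      have h0 := rpos j x
      generalize r j x = c at *
      generalize ‖f x‖ = a
      generalize ‖f (x + Pi.single j 1)‖ = b
      have : c * a ^ 2 + c⁻¹ * b ^ 2 - 2 * (a * b) = c * (a - c⁻¹ * b) ^ 2 := by
        field_simp; ring
      have h3 : 0 ≤ c * (a - c⁻¹ * b) ^ 2 := by positivity
      linarith
    have hS := ((hA j).add (hB' j)).mul_left (1 / 2)
    refine (tsum_of_norm_bounded hS.hasSum hpt).trans (le_of_eq ?_)
    rw [tsum_mul_left, (hA j).tsum_add (hB' j), tB j, ← (hA j).tsum_add (hB j)]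
    simp only [add_mul]
  have hAB : ∀ j, Summable fun x => (r j x + (r j (x - Pi.single j 1))⁻¹) * ‖f x‖ ^ 2 := fun j => by
    simpa only [add_mul] using (hA j).add (hB j)
  have h1 : |(⟪f, L f⟫_ℂ).re|
      ≤ (1 / 2) * ∑' x, (∑ j, (r j x + (r j (x - Pi.single j 1))⁻¹)) * ‖f x‖ ^ 2 := by
    rw [laplacian_re_inner hL]
    refine (Finset.abs_sum_le_sum_abs _ _).trans ((Finset.sum_le_sum fun j _ => hj j).trans ?_)
    rw [← Finset.mul_sum, ← Summable.tsum_finsetSum fun j _ => hAB j]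
    simp only [Finset.sum_mul, le_refl]
  have hδ : HasSum (fun x => (if x = n₀ then 1 / 10 else 0) * ‖f x‖ ^ 2)
      (1 / 10 * ‖f n₀‖ ^ 2) := by
    convert hasSum_ite_eq n₀ (1 / 10 * ‖f n₀‖ ^ 2) using 2 with x
    by_cases h : x = n₀ <;> simp [h]
  have h2 : ∑' x, (∑ j, (r j x + (r j (x - Pi.single j 1))⁻¹)) * ‖f x‖ ^ 2
      ≤ 2 * d * ‖f‖ ^ 2 - 1 / 10 * ‖f n₀‖ ^ 2 := by
    have hR := (hp.hasSum.mul_left (2 * (d : ℝ))).sub hδ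
    rw [norm_sq_eq, ← hR.tsum_eq]
    refine Summable.tsum_le_tsum (fun x => ?_) ?_ hR.summable
    · rw [← sub_mul]
      exact mul_le_mul_of_nonneg_right (hw x) (sq_nonneg _)
    · simp only [Finset.sum_mul]
      exact summable_sum fun j _ => hAB j
  linarith

/-! ### Bound on the number of eigenvalues -/

/-- Gram–Schmidt for an inner product given as a bare `Core`, so that it can be used on a space that
already carries another norm. -/
lemma exists_core_orthonormal {E : Type*} [AddCommGroup E] [Module ℂ E] [FiniteDimensional ℂ E]
    (c : InnerProductSpace.Core ℂ E) :
    ∃ b : Fin (Module.finrank ℂ E) → E, ∀ i j, c.inner (b i) (b j) = if i = j then 1 else 0 := by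
  let _ := c.toNormedAddCommGroup
  let _ : InnerProductSpace ℂ E := InnerProductSpace.ofCore c.toCore
  exact ⟨stdOrthonormalBasis ℂ E,
    fun i j => orthonormal_iff_ite.mp (stdOrthonormalBasis ℂ E).orthonormal i j⟩

lemma summable_weight {W : (Fin d → ℤ) → ℝ} (hW : Summable W) (h0 : ∀ n, 0 ≤ W n)
    (f : LatticeL2 d) : Summable fun n => W n * ‖f n‖ ^ 2 :=
  Summable.of_nonneg_of_le (fun n => mul_nonneg (h0 n) (sq_nonneg _))
    (fun n => mul_le_mul_of_nonneg_left
      (pow_le_pow_left₀ (norm_nonneg _) (lp.norm_apply_le_norm (by norm_num) f n) 2) (h0 n))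
    (hW.mul_right (‖f‖ ^ 2))

lemma abs_re_inner_mulOp_le (hV : Summable fun n => |V n|)
    (hT : IsMulOp d (fun n => (V n : ℂ)) T) (f g : LatticeL2 d) :
    2 * |(⟪f, T g⟫_ℂ).re| ≤ ∑' n, |V n| * (‖f n‖ ^ 2 + ‖g n‖ ^ 2) := by
  have hf := summable_weight hV (fun n => abs_nonneg _) f
  have hg := summable_weight hV (fun n => abs_nonneg _) g
  have hS : Summable fun n => |V n| * (‖f n‖ ^ 2 + ‖g n‖ ^ 2) := by
    simpa only [mul_add] using hf.add hg
  have h := tsum_of_norm_bounded (f := fun n => ⟪f n, T g n⟫_ℂ) (hS.mul_left (1 / 2)).hasSum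
    (fun n => by
      refine (norm_inner_le_norm _ _).trans ?_
      rw [hT, norm_mul, Complex.norm_real, Real.norm_eq_abs]
      have := mul_nonneg (abs_nonneg (V n)) (sq_nonneg (‖f n‖ - ‖g n‖))
      linarith)
  rw [← lp.inner_eq_tsum, tsum_mul_left] at h
  have := Complex.abs_re_le_norm ⟪f, T g⟫_ℂ
  linarith

/-- On the span of eigenvectors with eigenvalues beyond `d` on the side `ε`, the form of `ε H` is at
least `d`. -/
lemma re_inner_span_ge {ι : Type*} [Fintype ι] {H : LatticeL2 d →L[ℂ] LatticeL2 d} {ε : ℝ}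
    {ψ : ι → LatticeL2 d} (hψ : Orthonormal ℂ ψ) {l : ι → ℝ} (hl : ∀ i, (d : ℝ) < ε * l i)
    (hev : ∀ i, H (ψ i) = (l i : ℂ) • ψ i) {f : LatticeL2 d}
    (hf : f ∈ Submodule.span ℂ (Set.range ψ)) :
    d * ‖f‖ ^ 2 ≤ ε * (⟪f, H f⟫_ℂ).re := by
  obtain ⟨c, rfl⟩ := (Submodule.mem_span_range_iff_exists_fun ℂ).1 hf
  have h1 : H (∑ i, c i • ψ i) = ∑ i, (c i * l i) • ψ i := by
    simp only [map_sum, map_smul, hev, smul_smul]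
  have h2 : ‖∑ i, c i • ψ i‖ ^ 2 = ∑ i, ‖c i‖ ^ 2 := by
    rw [← inner_self_eq_norm_sq (𝕜 := ℂ), hψ.inner_sum]
    simp [← Complex.normSq_eq_conj_mul_self, Complex.normSq_eq_norm_sq, -Complex.ofReal_pow]
  have h3 : (⟪∑ i, c i • ψ i, H (∑ i, c i • ψ i)⟫_ℂ).re = ∑ i, ‖c i‖ ^ 2 * l i := by
    rw [h1, hψ.inner_sum, Complex.re_sum]
    refine Finset.sum_congr rfl fun i _ => ?_
    rw [← mul_assoc, ← Complex.normSq_eq_conj_mul_self, Complex.normSq_eq_norm_sq,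
      ← Complex.ofReal_mul, Complex.ofReal_re]
  rw [h2, h3, Finset.mul_sum, Finset.mul_sum]
  refine Finset.sum_le_sum fun i _ => ?_
  have := mul_le_mul_of_nonneg_left (hl i).le (sq_nonneg ‖c i‖)
  linarith

/-- The number of eigenvalues beyond `d` on the side `ε = ±1` is at most `20 ‖V‖₁`. With `M` the span
of the eigenvectors and `A = d - εL`, the form of `A` is positive definite and at most that of `εT`
on `M`. For an `A`-orthonormal basis `b` of `M` this gives `1 ≤ ∑ |V| |b i|²` for each `i`, while
`transience` gives `∑ |b i n|² ≤ 20` at each site `n`. -/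
lemma card_le (hd : 3 ≤ d) (hL : IsDiscreteLaplacian d L) (hV : Summable fun n => |V n|)
    (hT : IsMulOp d (fun n => (V n : ℂ)) T) {ι : Type*} [Fintype ι] {ε : ℝ} (hε : |ε| = 1)
    {ψ : ι → LatticeL2 d} (hψ : Orthonormal ℂ ψ) {l : ι → ℝ} (hl : ∀ i, (d : ℝ) < ε * l i)
    (hev : ∀ i, (L + T) (ψ i) = (l i : ℂ) • ψ i) :
    (Fintype.card ι : ℝ) ≤ 20 * ∑' n, |V n| := by
  set A : LatticeL2 d → LatticeL2 d := fun f => (d : ℂ) • f - (ε : ℂ) • L f with hA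
  have hAs : ∀ f g, ⟪A f, g⟫_ℂ = ⟪f, A g⟫_ℂ := by
    intro f g
    simp only [hA, inner_sub_left, inner_sub_right, inner_smul_left, inner_smul_right,
      laplacian_symm hL, map_natCast, Complex.conj_ofReal]
  have hAre : ∀ f, (⟪f, A f⟫_ℂ).re = d * ‖f‖ ^ 2 - ε * (⟪f, L f⟫_ℂ).re := by
    intro f
    simp only [hA, inner_sub_right, inner_smul_right, inner_self_eq_norm_sq_to_K]
    rw [Complex.sub_re, Complex.re_ofReal_mul]
    congr 1
    norm_cast
    rw [← Complex.ofReal_natCast, Complex.re_ofReal_mul]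
    rfl
  have hApos : ∀ f n, ‖f n‖ ^ 2 / 20 ≤ (⟪f, A f⟫_ℂ).re := by
    intro f n
    have h1 := transience hd hL f n
    have h2 : ε * (⟪f, L f⟫_ℂ).re ≤ |(⟪f, L f⟫_ℂ).re| := by
      refine (le_abs_self _).trans ?_
      rw [abs_mul, hε, one_mul]
    rw [hAre]
    linarith
  have hAadd : ∀ f g, A (f + g) = A f + A g := fun f g => by
    simp only [hA, map_add, smul_add]; abel
  have hAsmul : ∀ (c : ℂ) f, A (c • f) = c • A f := fun c f => by
    simp only [hA, map_smul, smul_sub, smul_comm c]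
  set M := Submodule.span ℂ (Set.range ψ) with hM
  have hfin : Module.finrank ℂ M = Fintype.card ι := finrank_span_eq_card hψ.linearIndependent
  have : FiniteDimensional ℂ M := FiniteDimensional.span_of_finite ℂ (Set.finite_range ψ)
  let c : InnerProductSpace.Core ℂ M :=
    { inner := fun x y => ⟪(x : LatticeL2 d), A y⟫_ℂ
      conj_inner_symm := fun x y => by
        rw [inner_conj_symm, hAs]
      re_inner_nonneg := fun x => by
        have := hApos x 0
        exact le_trans (by positivity) this
      add_left := fun x y z => by
        simp
      smul_left := fun x y r => by
        simp [mul_comm]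
      definite := fun x hx => by
        ext n
        have h := hApos x n
        rw [hx, Complex.zero_re] at h
        have h3 : ‖(x : LatticeL2 d) n‖ ^ 2 ≤ 0 := by linarith
        have h4 : ‖(x : LatticeL2 d) n‖ = 0 := pow_eq_zero_iff (two_ne_zero) |>.1
          (le_antisymm h3 (sq_nonneg _))
        simpa using h4 }
  obtain ⟨b, hb⟩ := exists_core_orthonormal c
  have hb' : ∀ i j, ⟪(b i : LatticeL2 d), A (b j)⟫_ℂ = if i = j then 1 else 0 := hb
  -- Bessel-type bound: test `hApos` on `f = ∑ conj (b i n) • b i`, for which `f n` and the `A`-form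
  -- of `f` both equal `S`, so that `S ^ 2 ≤ 20 * S`.
  have hbn : ∀ n, ∑ i, ‖(b i : LatticeL2 d) n‖ ^ 2 ≤ 20 := by
    intro n
    set S := ∑ i, ‖(b i : LatticeL2 d) n‖ ^ 2 with hS
    have hS0 : 0 ≤ S := Finset.sum_nonneg fun i _ => sq_nonneg _
    set f : LatticeL2 d := ∑ i, conj ((b i : LatticeL2 d) n) • (b i : LatticeL2 d) with hf
    have hcs : ∀ z : ℂ, conj z * z = ((‖z‖ ^ 2 : ℝ) : ℂ) := fun z => by
      rw [← Complex.normSq_eq_conj_mul_self, Complex.normSq_eq_norm_sq]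
    have hfn : f n = (S : ℂ) := by
      rw [hf, lp.coeFn_sum, Finset.sum_apply, hS, Complex.ofReal_sum]
      refine Finset.sum_congr rfl fun i _ => ?_
      rw [lp.coeFn_smul, Pi.smul_apply, smul_eq_mul, hcs]
    have hAf : A f = ∑ i, conj ((b i : LatticeL2 d) n) • A (b i : LatticeL2 d) := by
      let A' : LatticeL2 d →ₗ[ℂ] LatticeL2 d := ⟨⟨A, hAadd⟩, hAsmul⟩
      have : A' f = ∑ i, conj ((b i : LatticeL2 d) n) • A' (b i : LatticeL2 d) := by
        rw [hf, map_sum]; simp only [map_smul]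
      exact this
    have hff : ⟪f, A f⟫_ℂ = (S : ℂ) := by
      rw [hAf, hf, sum_inner]
      simp only [inner_sum, inner_smul_left, inner_smul_right, hb']
      simp only [mul_ite, mul_one, mul_zero, Finset.sum_ite_eq, Finset.mem_univ, if_true,
        Complex.conj_conj]
      rw [hS, Complex.ofReal_sum]
      exact Finset.sum_congr rfl fun i _ => hcs _
    have h := hApos f n
    rw [hff, hfn, Complex.norm_real, Real.norm_eq_abs, sq_abs, Complex.ofReal_re] at h
    by_contra hlt
    push Not at hlt
    nlinarith
  have hbi : ∀ i, 1 ≤ ∑' n, |V n| * ‖(b i : LatticeL2 d) n‖ ^ 2 := by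
    intro i
    have h1 := re_inner_span_ge hψ hl hev (b i).2
    have h2 : (⟪(b i : LatticeL2 d), A (b i)⟫_ℂ).re = 1 := by rw [hb']; simp
    rw [hAre] at h2
    rw [add_apply, inner_add_right, Complex.add_re, mul_add] at h1
    have h3 := abs_re_inner_mulOp_le hV hT (b i : LatticeL2 d) (b i)
    simp only [← two_mul, mul_left_comm _ (2 : ℝ), tsum_mul_left] at h3
    have h4 : ε * (⟪(b i : LatticeL2 d), T (b i)⟫_ℂ).re
        ≤ |(⟪(b i : LatticeL2 d), T (b i)⟫_ℂ).re| := by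
      refine (le_abs_self _).trans ?_
      rw [abs_mul, hε, one_mul]
    linarith
  have hw := fun i => summable_weight hV (fun n => abs_nonneg _) (b i : LatticeL2 d)
  calc (Fintype.card ι : ℝ) = ∑ i : Fin (Module.finrank ℂ M), (1 : ℝ) := by simp [hfin]
    _ ≤ ∑ i, ∑' n, |V n| * ‖(b i : LatticeL2 d) n‖ ^ 2 := Finset.sum_le_sum fun i _ => hbi i
    _ = ∑' n, ∑ i, |V n| * ‖(b i : LatticeL2 d) n‖ ^ 2 :=
        (Summable.tsum_finsetSum fun i _ => hw i).symm
    _ ≤ ∑' n, 20 * |V n| := by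
        refine Summable.tsum_le_tsum (fun n => ?_) (summable_sum fun i _ => hw i) (hV.mul_left 20)
        rw [← Finset.mul_sum, mul_comm]
        exact mul_le_mul_of_nonneg_right (hbn n) (abs_nonneg _)
    _ = 20 * ∑' n, |V n| := tsum_mul_left

/-! ### The sum over eigenvalues -/

lemma bessel_eval {ι : Type*} [Fintype ι] {ψ : ι → LatticeL2 d} (hψ : Orthonormal ℂ ψ)
    (n : Fin d → ℤ) : ∑ i, ‖ψ i n‖ ^ 2 ≤ 1 := by
  have h := hψ.sum_inner_products_le (x := lp.single 2 n (1 : ℂ)) (s := Finset.univ)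
  simpa [lp.inner_single_right] using h

lemma bessel_laplacian (hL : IsDiscreteLaplacian d L) {ι : Type*} [Fintype ι]
    {ψ : ι → LatticeL2 d} (hψ : Orthonormal ℂ ψ)
    (n : Fin d → ℤ) : ∑ i, ‖L (ψ i) n‖ ^ 2 ≤ (d : ℝ) ^ 2 := by
  have h := hψ.sum_inner_products_le (x := L (lp.single 2 n (1 : ℂ))) (s := Finset.univ)
  simp only [← laplacian_symm hL, lp.inner_single_right] at h
  have h2 := laplacian_norm_le hL (lp.single 2 n (1 : ℂ))
  have h3 : ‖L (lp.single 2 n (1 : ℂ))‖ ^ 2 ≤ (d : ℝ) ^ 2 :=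
    pow_le_pow_left₀ (norm_nonneg _) (by simpa using h2) 2
  refine le_trans (le_of_eq ?_) (h.trans h3)
  simp

/-- Expanding `l² = ‖(L + T) ψ‖²`, the term `‖T ψ‖²` sums to at most `∑ V²` by Bessel's inequality at
each site, the cross term to at most a multiple of `∑ |V|`, and `‖L ψ‖² ≤ d²`. -/
lemma sum_sq_sub_le (hL : IsDiscreteLaplacian d L) (hV : Summable fun n => |V n|)
    (hV2 : Summable fun n => V n ^ 2)
    (hT : IsMulOp d (fun n => (V n : ℂ)) T) {ι : Type*} [Fintype ι]
    {ψ : ι → LatticeL2 d} (hψ : Orthonormal ℂ ψ) {l : ι → ℝ}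
    (hev : ∀ i, (L + T) (ψ i) = (l i : ℂ) • ψ i) :
    ∑ i, (l i ^ 2 - (d : ℝ) ^ 2) ≤ (∑' n, V n ^ 2) + (1 + (d : ℝ) ^ 2) * ∑' n, |V n| := by
  have hw1 := fun i => summable_weight hV2 (fun n => sq_nonneg _) (ψ i)
  have hw2 : ∀ i, Summable fun n => |V n| * (‖L (ψ i) n‖ ^ 2 + ‖ψ i n‖ ^ 2) := fun i => by
    simpa only [mul_add] using (summable_weight hV (fun n => abs_nonneg _) (L (ψ i))).add
      (summable_weight hV (fun n => abs_nonneg _) (ψ i))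
  have hi : ∀ i, l i ^ 2 - (d : ℝ) ^ 2 ≤ ∑' n, (V n ^ 2 * ‖ψ i n‖ ^ 2
      + |V n| * (‖L (ψ i) n‖ ^ 2 + ‖ψ i n‖ ^ 2)) := by
    intro i
    have h1 : ‖L (ψ i) + T (ψ i)‖ ^ 2 = l i ^ 2 := by
      rw [← add_apply, hev, norm_smul, hψ.1 i]
      simp
    rw [norm_add_sq (𝕜 := ℂ)] at h1
    have h2 : ‖T (ψ i)‖ ^ 2 = ∑' n, V n ^ 2 * ‖ψ i n‖ ^ 2 := by
      rw [norm_sq_eq]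
      refine tsum_congr fun n => ?_
      rw [hT, norm_mul, mul_pow, Complex.norm_real, Real.norm_eq_abs, sq_abs]
    have h3 : ‖L (ψ i)‖ ^ 2 ≤ (d : ℝ) ^ 2 := by
      have := laplacian_norm_le hL (ψ i)
      rw [hψ.1 i, mul_one] at this
      exact pow_le_pow_left₀ (norm_nonneg _) this 2
    have h4 := abs_re_inner_mulOp_le hV hT (L (ψ i)) (ψ i)
    have h5 := le_abs_self (⟪L (ψ i), T (ψ i)⟫_ℂ).re
    rw [(hw1 i).tsum_add (hw2 i), ← h2]
    simp only [RCLike.re_to_complex] at h1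
    linarith
  refine (Finset.sum_le_sum fun i _ => hi i).trans ?_
  rw [← Summable.tsum_finsetSum fun i _ => (hw1 i).add (hw2 i), ← tsum_mul_left,
    ← hV2.tsum_add (hV.mul_left _)]
  refine Summable.tsum_le_tsum (fun n => ?_) (summable_sum fun i _ => (hw1 i).add (hw2 i))
    (hV2.add (hV.mul_left _))
  rw [Finset.sum_add_distrib, ← Finset.mul_sum, ← Finset.mul_sum, Finset.sum_add_distrib]
  have b1 := mul_le_mul_of_nonneg_left (bessel_eval hψ n) (sq_nonneg (V n))
  have b2 := mul_le_mul_of_nonneg_left (add_le_add (bessel_laplacian hL hψ n) (bessel_eval hψ n))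
    (abs_nonneg (V n))
  linarith

lemma finite_bound (hd : 3 ≤ d) (hL : IsDiscreteLaplacian d L) (hV : Summable fun n => |V n|)
    (hV2 : Summable fun n => V n ^ 2)
    (hT : IsMulOp d (fun n => (V n : ℂ)) T) {ι : Type*} [Fintype ι]
    {ψ : ι → LatticeL2 d} (hψ : Orthonormal ℂ ψ) {l : ι → ℝ} (hl : ∀ i, (d : ℝ) < |l i|)
    (hev : ∀ i, (L + T) (ψ i) = (l i : ℂ) • ψ i) :
    ∑ i, |l i| * √(l i ^ 2 - (d : ℝ) ^ 2)
      ≤ (∑' n, V n ^ 2) + (1 + 21 * (d : ℝ) ^ 2) * ∑' n, |V n| := by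
  have hd0 : (0 : ℝ) ≤ d := Nat.cast_nonneg d
  have h1 := sum_sq_sub_le hL hV hV2 hT hψ hev
  have hp := card_le hd hL hV hT (ι := {i // 0 < l i}) (ε := 1) (by simp)
    (hψ.comp _ Subtype.val_injective) (l := fun i => l i)
    (fun i => by have := hl i; rw [abs_of_pos i.2] at this; linarith) (fun i => hev i)
  have hn := card_le hd hL hV hT (ι := {i // ¬ 0 < l i}) (ε := -1) (by simp)
    (hψ.comp _ Subtype.val_injective) (l := fun i => l i)
    (fun i => by have := hl i; rw [abs_of_nonpos (not_lt.1 i.2)] at this; linarith)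
    (fun i => hev i)
  have hc : (Fintype.card ι : ℝ) ≤ 40 * ∑' n, |V n| := by
    have := Fintype.card_subtype_compl (fun i => 0 < l i)
    have h3 := Fintype.card_subtype_le (fun i => 0 < l i)
    have h4 : (Fintype.card ι : ℝ)
        = Fintype.card {i // 0 < l i} + Fintype.card {i // ¬ 0 < l i} := by
      norm_cast; omega
    linarith
  -- The arithmetic–geometric mean inequality for `|l|` and `√(l² - d²)`.
  have hpt : ∀ i, |l i| * √(l i ^ 2 - (d : ℝ) ^ 2)
      ≤ (l i ^ 2 - (d : ℝ) ^ 2) + (d : ℝ) ^ 2 / 2 := by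
    intro i
    have h0 : 0 ≤ l i ^ 2 - (d : ℝ) ^ 2 := by
      rw [← sq_abs (l i)]; nlinarith [hl i]
    have h2 := Real.sq_sqrt h0
    have h3 := sq_abs (l i)
    nlinarith [sq_nonneg (|l i| - √(l i ^ 2 - (d : ℝ) ^ 2))]
  refine (Finset.sum_le_sum fun i _ => hpt i).trans ?_
  rw [Finset.sum_add_distrib, Finset.sum_const, Finset.card_univ, nsmul_eq_mul]
  have := mul_le_mul_of_nonneg_right hc (by positivity : 0 ≤ (d : ℝ) ^ 2 / 2)
  linarith

/-- The embedding `ℓ^{2/3} ⊆ ℓ¹`, with constant one. -/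
lemma summable_abs_of_rpow {α : Type*} {V : α → ℝ} (h : Summable fun n => |V n| ^ ((2 : ℝ) / 3)) :
    (Summable fun n => |V n|) ∧
      ∑' n, |V n| ≤ (∑' n, |V n| ^ ((2 : ℝ) / 3)) ^ ((3 : ℝ) / 2) := by
  set S := ∑' n, |V n| ^ ((2 : ℝ) / 3) with hS
  have h0 : ∀ n, 0 ≤ |V n| ^ ((2 : ℝ) / 3) := fun n => Real.rpow_nonneg (abs_nonneg _) _
  have hS0 : 0 ≤ S := tsum_nonneg h0
  have hle : ∀ n, |V n| ≤ |V n| ^ ((2 : ℝ) / 3) * S ^ ((1 : ℝ) / 2) := by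
    intro n
    have h1 : |V n| ^ ((2 : ℝ) / 3) ≤ S := h.le_tsum n fun m _ => h0 m
    have h2 := Real.rpow_le_rpow (h0 n) h1 (by norm_num : (0 : ℝ) ≤ 1 / 2)
    rw [← Real.rpow_mul (abs_nonneg _)] at h2
    calc |V n| = |V n| ^ ((2 : ℝ) / 3) * |V n| ^ ((2 : ℝ) / 3 * (1 / 2)) := by
          rw [← Real.rpow_add_of_nonneg (abs_nonneg _) (by norm_num) (by norm_num)]
          norm_num
      _ ≤ _ := mul_le_mul_of_nonneg_left h2 (h0 n)
  have hs := Summable.of_nonneg_of_le (fun n => abs_nonneg (V n)) hle (h.mul_right _)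
  refine ⟨hs, (hs.tsum_le_tsum hle (h.mul_right _)).trans (le_of_eq ?_)⟩
  rw [tsum_mul_right, ← hS]
  nth_rw 1 [← Real.rpow_one S]
  rw [← Real.rpow_add_of_nonneg hS0 (by norm_num) (by norm_num)]
  norm_num

lemma eigenvalue_real (hL : IsDiscreteLaplacian d L)
    (hT : IsMulOp d (fun n => (V n : ℂ)) T) {l : ℂ} (hl : l ∈ evSet d (L + T)) :
    l.im = 0 ∧ (d : ℝ) < |l.re| := by
  obtain ⟨⟨f, hf, hlf⟩, hn⟩ := hl
  have h : ⟪(L + T) f, f⟫_ℂ = ⟪f, (L + T) f⟫_ℂ := by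
    simp only [add_apply, inner_add_left, inner_add_right,
      laplacian_symm hL, mulOp_symm hT]
  rw [hlf, inner_smul_left, inner_smul_right] at h
  have him := Complex.conj_eq_iff_im.1 (mul_right_cancel₀ (inner_self_ne_zero.2 hf) h)
  exact ⟨him, not_le.1 fun hle => hn ⟨him, hle⟩⟩

lemma exists_orthonormal_eigenvectors (hL : IsDiscreteLaplacian d L)
    (hT : IsMulOp d (fun n => (V n : ℂ)) T) :
    ∃ ψ : evSet d (L + T) → LatticeL2 d, Orthonormal ℂ ψ ∧
      ∀ l, (L + T) (ψ l) = (((l : ℂ).re : ℝ) : ℂ) • ψ l := by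
  have hre : ∀ l : evSet d (L + T), (((l : ℂ).re : ℝ) : ℂ) = l := fun l =>
    Complex.ext (by simp) (by simp [(eigenvalue_real hL hT l.2).1])
  choose f hf using fun l : evSet d (L + T) => l.2.1
  have hev : ∀ l, (L + T) (((‖f l‖⁻¹ : ℝ) : ℂ) • f l)
      = (((l : ℂ).re : ℝ) : ℂ) • ((‖f l‖⁻¹ : ℝ) : ℂ) • f l := by
    intro l
    rw [hre, map_smul, (hf l).2, smul_comm]
  refine ⟨fun l => ((‖f l‖⁻¹ : ℝ) : ℂ) • f l, ⟨fun l => ?_, fun l m hlm => ?_⟩, hev⟩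
  · rw [norm_smul, Complex.norm_real, norm_inv, norm_norm,
      inv_mul_cancel₀ (norm_ne_zero_iff.2 (hf l).1)]
  · have h : ∀ x y, ⟪(L + T) x, y⟫_ℂ = ⟪x, (L + T) y⟫_ℂ := fun x y => by
      simp only [add_apply, inner_add_left, inner_add_right,
        laplacian_symm hL, mulOp_symm hT]
    have h1 := h (((‖f l‖⁻¹ : ℝ) : ℂ) • f l) (((‖f m‖⁻¹ : ℝ) : ℂ) • f m)
    rw [hev, hev, inner_smul_left _ _ ((((l : ℂ).re : ℝ) : ℂ)),
      inner_smul_right _ _ ((((m : ℂ).re : ℝ) : ℂ)), Complex.conj_ofReal, hre, hre] at h1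
    by_contra hne
    exact hlm (Subtype.ext (mul_right_cancel₀ hne h1))

end

/-- For `d ≥ 3` there is `C = C(d) > 0` such that for every real-valued
`V ∈ ℓ^{2/3}(ℤᵈ, ℝ)`, with `H = Δ + V`, every eigenvalue of `H` outside `[-d,d]` is a real
number `λ` with `|λ| > d`, and `∑_{λ ∈ E} |λ|√(λ² - d²) ≤ ∑ V(n)² + C‖V‖_{2/3}`, where `E`
is the set of eigenvalues of `H` in `ℂ \ [-d,d]`. -/
theorem statement17 (d : ℕ) (hd : 3 ≤ d) :
    ∃ C : ℝ, 0 < C ∧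
      ∀ (V : (Fin d → ℤ) → ℝ), Summable (fun n => |V n| ^ ((2:ℝ)/3)) →
      ∀ (L T : lp (fun _ : Fin d → ℤ => ℂ) 2 →L[ℂ] lp (fun _ : Fin d → ℤ => ℂ) 2),
        IsDiscreteLaplacian d L → IsMulOp d (fun n => (V n : ℂ)) T →
        (∀ l ∈ evSet d (L + T), l.im = 0 ∧ (d : ℝ) < |l.re|) ∧
        Summable (fun l : evSet d (L + T) =>
          |(l : ℂ).re| * Real.sqrt ((l : ℂ).re ^ 2 - (d : ℝ) ^ 2)) ∧
        (∑' l : evSet d (L + T), |(l : ℂ).re| * Real.sqrt ((l : ℂ).re ^ 2 - (d : ℝ) ^ 2))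
          ≤ (∑' n : Fin d → ℤ, V n ^ 2)
            + C * (∑' n : Fin d → ℤ, |V n| ^ ((2:ℝ)/3)) ^ ((3:ℝ)/2) := by
  refine ⟨1 + 21 * (d : ℝ) ^ 2, by positivity, fun V hV L T hL hT => ?_⟩
  obtain ⟨hV1, hle⟩ := summable_abs_of_rpow hV
  have hV2 : Summable fun n => V n ^ 2 := by
    refine Summable.of_nonneg_of_le (fun n => sq_nonneg _) (fun n => ?_)
      (hV1.mul_left (∑' n, |V n|))
    rw [← sq_abs, sq]
    exact mul_le_mul_of_nonneg_right (hV1.le_tsum n fun _ _ => abs_nonneg _) (abs_nonneg _)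
  obtain ⟨ψ, hψ, hev⟩ := exists_orthonormal_eigenvectors hL hT
  have hfin : ∀ s : Finset (evSet d (L + T)),
      ∑ l ∈ s, |(l : ℂ).re| * Real.sqrt ((l : ℂ).re ^ 2 - (d : ℝ) ^ 2)
        ≤ (∑' n : Fin d → ℤ, V n ^ 2)
          + (1 + 21 * (d : ℝ) ^ 2) * (∑' n : Fin d → ℤ, |V n| ^ ((2:ℝ)/3)) ^ ((3:ℝ)/2) := by
    intro s
    have h := finite_bound hd hL hV1 hV2 hT (ι := s) (hψ.comp _ Subtype.val_injective)
      (l := fun l => (l.1 : ℂ).re) (fun l => (eigenvalue_real hL hT l.1.2).2) (fun l => hev l.1)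
    rw [← Finset.sum_coe_sort]
    refine h.trans ?_
    have := mul_le_mul_of_nonneg_left hle (by positivity : 0 ≤ 1 + 21 * (d : ℝ) ^ 2)
    linarith
  have h0 : ∀ l : evSet d (L + T),
      0 ≤ |(l : ℂ).re| * Real.sqrt ((l : ℂ).re ^ 2 - (d : ℝ) ^ 2) := fun l => by positivity
  have hs := summable_of_sum_le h0 hfin
  exact ⟨fun l hl => eigenvalue_real hL hT hl, hs, hs.tsum_le_of_sum_le hfin⟩
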